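/- arXiv:1404.2893 — 8 statements merged into one kernel-verified Lean document; each statement's English description precedes it below -/
import Mathlib

section
/- Let f ∈ L¹(μ) be nonnegative with f ≠ 0 and with f·log f integrable. Then for every x ∈ L¹(μ) with ‖x‖₁ ≤ 1 such that f·log|x| is integrable, one has ∫_S f·log|x| dμ ≤ Φ₁(f). Moreover, the choice x = f/‖f‖₁ is admissible (‖x‖₁ = 1 and f·log|x| is integrable) and achieves equality: ∫_S f·log(f/‖f‖₁) dμ = Φ₁(f). Hence the indicator of L¹, namely sup{∫_S f·log|x| dμ : ‖x‖₁ ≤ 1}, equals Φ₁(f) and the supremum is attained. -/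
open MeasureTheory

/-- The entropy functional (indicator of `L¹`):
`Φ₁(f) = ∫ f·log f dμ − ‖f‖₁·log ‖f‖₁` (with `Real.log 0 = 0`, so `Φ₁(0) = 0`). -/
noncomputable def Phi1 {S : Type*} [MeasurableSpace S] (μ : Measure S) (f : S → ℝ) : ℝ :=
  ∫ s, f s * Real.log (f s) ∂μ - (∫ s, f s ∂μ) * Real.log (∫ s, f s ∂μ)

theorem stmt0 {S : Type*} [MeasurableSpace S] (μ : Measure S) [SigmaFinite μ]
    (f : S → ℝ) (hf : Integrable f μ) (hf_nonneg : 0 ≤ᵐ[μ] f) (hf_ne : ¬ f =ᵐ[μ] 0)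
    (hflog : Integrable (fun s => f s * Real.log (f s)) μ) :
    (∀ x : S → ℝ, Integrable x μ → (∫ s, |x s| ∂μ) ≤ 1 →
        Integrable (fun s => f s * Real.log |x s|) μ →
        (∀ᵐ s ∂μ, f s = 0 ∨ x s ≠ 0) →
        (∫ s, f s * Real.log |x s| ∂μ) ≤ Phi1 μ f) ∧
    ((∫ s, |f s / ∫ u, f u ∂μ| ∂μ) = 1 ∧
      Integrable (fun s => f s * Real.log |f s / ∫ u, f u ∂μ|) μ ∧
      (∫ s, f s * Real.log |f s / ∫ u, f u ∂μ| ∂μ) = Phi1 μ f) ∧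
    IsGreatest
      {r : ℝ | ∃ x : S → ℝ, Integrable x μ ∧ (∫ s, |x s| ∂μ) ≤ 1 ∧
        Integrable (fun s => f s * Real.log |x s|) μ ∧
        (∀ᵐ s ∂μ, f s = 0 ∨ x s ≠ 0) ∧
        r = ∫ s, f s * Real.log |x s| ∂μ}
      (Phi1 μ f) := by
  have hc : 0 < ∫ u, f u ∂μ := by
    rcases (integral_nonneg_of_ae hf_nonneg).lt_or_eq with h | h
    · exact h
    · exact absurd ((integral_eq_zero_iff_of_nonneg_ae hf_nonneg hf).1 h.symm) hf_ne
  have hPhi : Phi1 μ f = ∫ s, f s * Real.log (f s) ∂μ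
      - (∫ s, f s ∂μ) * Real.log (∫ s, f s ∂μ) := rfl
  generalize hcdef : ∫ u, f u ∂μ = c at *
  have h1 : ∀ x : S → ℝ, Integrable x μ → (∫ s, |x s| ∂μ) ≤ 1 →
        Integrable (fun s => f s * Real.log |x s|) μ →
        (∀ᵐ s ∂μ, f s = 0 ∨ x s ≠ 0) →
        (∫ s, f s * Real.log |x s| ∂μ) ≤ Phi1 μ f := by
    intro x hx hx1 hxl hx0
    have i1 : Integrable (fun s => f s * Real.log (f s) - f s * Real.log c) μ :=
      hflog.sub (hf.mul_const _)
    have i2 : Integrable (fun s => c * |x s| - f s) μ := (hx.abs.const_mul c).sub hf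
    have hle : (∫ s, f s * Real.log |x s| ∂μ) ≤
        ∫ s, ((f s * Real.log (f s) - f s * Real.log c) + (c * |x s| - f s)) ∂μ := by
      refine integral_mono_ae hxl (i1.add i2) ?_
      filter_upwards [hf_nonneg, hx0] with s hs hs0
      have hs' : 0 ≤ f s := hs
      rcases hs'.eq_or_lt with h | h
      · simp only [← h]
        have := mul_nonneg hc.le (abs_nonneg (x s))
        simpa using this
      · have hxs : 0 < |x s| := abs_pos.2 (hs0.resolve_left h.ne')
        have hlog := Real.log_le_sub_one_of_pos (div_pos (mul_pos hc hxs) h)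
        rw [Real.log_div (mul_pos hc hxs).ne' h.ne', Real.log_mul hc.ne' hxs.ne'] at hlog
        have h2 := mul_le_mul_of_nonneg_left hlog h.le
        have h3 : f s * (c * |x s| / f s - 1) = c * |x s| - f s := by
          field_simp
        rw [h3] at h2
        show f s * Real.log |x s| ≤ _
        nlinarith
    rw [integral_add i1 i2, integral_sub hflog (hf.mul_const _),
      integral_sub (hx.abs.const_mul c) hf, integral_mul_const, integral_const_mul, hcdef] at hle
    rw [hPhi]
    nlinarith
  have hae : (fun s => f s * Real.log |f s / c|) =ᵐ[μ]
      fun s => f s * Real.log (f s) - f s * Real.log c := by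
    filter_upwards with s
    rw [Real.log_abs]
    by_cases h : f s = 0
    · simp [h]
    · rw [Real.log_div h hc.ne']; ring
  have h2 : (∫ s, |f s / c| ∂μ) = 1 := by
    have : (fun s => |f s / c|) =ᵐ[μ] fun s => f s / c := by
      filter_upwards [hf_nonneg] with s hs
      exact abs_of_nonneg (div_nonneg hs hc.le)
    rw [integral_congr_ae this, integral_div, hcdef, div_self hc.ne']
  have h3 : Integrable (fun s => f s * Real.log |f s / c|) μ :=
    (integrable_congr hae).2 (hflog.sub (hf.mul_const _))
  have h4 : (∫ s, f s * Real.log |f s / c| ∂μ) = Phi1 μ f := by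
    rw [integral_congr_ae hae, integral_sub hflog (hf.mul_const _), integral_mul_const, hcdef, hPhi]
  refine ⟨h1, ⟨h2, h3, h4⟩, ⟨fun s => f s / c, hf.div_const c, h2.le, h3, ?_, h4.symm⟩, ?_⟩
  · filter_upwards with s
    by_cases h : f s = 0
    · exact Or.inl h
    · exact Or.inr (div_ne_zero h hc.ne')
  · rintro r ⟨x, hx, hx1, hxl, hx0, rfl⟩
    exact h1 x hx hx1 hxl hx0
end

section
/- Let 1 ≤ p < ∞ and let f ∈ L¹(μ) be nonnegative with f ≠ 0 and with f·log f integrable. Then for every x ∈ L^p(μ) with ‖x‖_p ≤ 1 such that f·log|x| is integrable, one has ∫_S f·log|x| dμ ≤ (1/p)·Φ₁(f). Moreover, the choice x = (f/‖f‖₁)^{1/p} is admissible (‖x‖_p = 1 and f·log|x| is integrable) and achieves equality. Hence the indicator of L^p satisfies Φ_{L^p}(f) = (1/p)·Φ₁(f). -/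
open MeasureTheory

theorem stmt1 {S : Type*} [MeasurableSpace S] (μ : Measure S) [SigmaFinite μ]
    (p : ℝ) (hp : 1 ≤ p)
    (f : S → ℝ) (hf : Integrable f μ) (hf_nonneg : 0 ≤ᵐ[μ] f) (hf_ne : ¬ f =ᵐ[μ] 0)
    (hflog : Integrable (fun s => f s * Real.log (f s)) μ) :
    (∀ x : S → ℝ, AEStronglyMeasurable x μ → Integrable (fun s => |x s| ^ p) μ →
        (∫ s, |x s| ^ p ∂μ) ≤ 1 →
        Integrable (fun s => f s * Real.log |x s|) μ →
        (∀ᵐ s ∂μ, f s = 0 ∨ x s ≠ 0) →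
        (∫ s, f s * Real.log |x s| ∂μ) ≤ (1 / p) * Phi1 μ f) ∧
    (AEStronglyMeasurable (fun s => (f s / ∫ u, f u ∂μ) ^ (1 / p)) μ ∧
      Integrable (fun s => |(f s / ∫ u, f u ∂μ) ^ (1 / p)| ^ p) μ ∧
      (∫ s, |(f s / ∫ u, f u ∂μ) ^ (1 / p)| ^ p ∂μ) = 1 ∧
      Integrable (fun s => f s * Real.log |(f s / ∫ u, f u ∂μ) ^ (1 / p)|) μ ∧
      (∫ s, f s * Real.log |(f s / ∫ u, f u ∂μ) ^ (1 / p)| ∂μ) = (1 / p) * Phi1 μ f) ∧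
    IsGreatest
      {r : ℝ | ∃ x : S → ℝ, AEStronglyMeasurable x μ ∧ Integrable (fun s => |x s| ^ p) μ ∧
        (∫ s, |x s| ^ p ∂μ) ≤ 1 ∧
        Integrable (fun s => f s * Real.log |x s|) μ ∧
        (∀ᵐ s ∂μ, f s = 0 ∨ x s ≠ 0) ∧
        r = ∫ s, f s * Real.log |x s| ∂μ}
      ((1 / p) * Phi1 μ f) := by
  have hp0 : 0 < p := by linarith
  have hI : 0 < ∫ u, f u ∂μ := by
    refine lt_of_le_of_ne (integral_nonneg_of_ae hf_nonneg) (fun h => hf_ne ?_)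
    exact (integral_eq_zero_iff_of_nonneg_ae hf_nonneg hf).1 h.symm
  have hPhi : Phi1 μ f = ∫ s, f s * Real.log (f s) ∂μ
      - (∫ s, f s ∂μ) * Real.log (∫ s, f s ∂μ) := rfl
  generalize hIdef : (∫ u, f u ∂μ) = I at *
  have h1 : ∀ x : S → ℝ, AEStronglyMeasurable x μ → Integrable (fun s => |x s| ^ p) μ →
        (∫ s, |x s| ^ p ∂μ) ≤ 1 →
        Integrable (fun s => f s * Real.log |x s|) μ →
        (∀ᵐ s ∂μ, f s = 0 ∨ x s ≠ 0) →
        (∫ s, f s * Real.log |x s| ∂μ) ≤ (1 / p) * Phi1 μ f := by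
    intro x _ hxi hx1 hxl hx0
    have hpt : ∀ᵐ s ∂μ, p * (f s * Real.log |x s|) + Real.log I * f s
        ≤ f s * Real.log (f s) + (I * |x s| ^ p - f s) := by
      filter_upwards [hf_nonneg, hx0] with s hs hs0
      simp only [Pi.zero_apply] at hs
      rcases hs.eq_or_lt with h | h
      · rw [← h]
        have : 0 ≤ I * |x s| ^ p := by positivity
        simpa using this
      · have hx : 0 < |x s| := abs_pos.2 (hs0.resolve_left h.ne')
        have hxp : 0 < |x s| ^ p := Real.rpow_pos_of_pos hx p
        have hl := Real.log_le_sub_one_of_pos (div_pos (mul_pos hI hxp) h)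
        rw [Real.log_div (mul_pos hI hxp).ne' h.ne', Real.log_mul hI.ne' hxp.ne',
          Real.log_rpow hx] at hl
        have h2 := mul_le_mul_of_nonneg_left hl h.le
        have h3 : f s * (I * |x s| ^ p / f s - 1) = I * |x s| ^ p - f s := by
          field_simp
        rw [h3] at h2
        linarith
    have hsub : Integrable (fun s => I * |x s| ^ p - f s) μ := (hxi.const_mul I).sub hf
    have hint := integral_mono_ae ((hxl.const_mul p).add (hf.const_mul (Real.log I)))
      (hflog.add hsub) hpt
    simp only [Pi.add_apply] at hint
    rw [integral_add (hxl.const_mul p) (hf.const_mul (Real.log I)),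
      integral_add hflog hsub] at hint
    rw [integral_sub (hxi.const_mul I) hf, integral_const_mul, integral_const_mul,
      integral_const_mul, hIdef] at hint
    have h4 := mul_le_mul_of_nonneg_left hx1 hI.le
    rw [one_div, ← div_eq_inv_mul, le_div_iff₀ hp0, hPhi]
    linarith
  have hm : AEStronglyMeasurable (fun s => (f s / I) ^ (1 / p)) μ :=
    ((hf.aemeasurable.div_const I).pow_const (1 / p)).aestronglyMeasurable
  have e1 : (fun s => |(f s / I) ^ (1 / p)| ^ p) =ᵐ[μ] fun s => f s / I := by
    filter_upwards [hf_nonneg] with s hs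
    have h : 0 ≤ f s / I := div_nonneg hs hI.le
    rw [abs_of_nonneg (Real.rpow_nonneg h _), ← Real.rpow_mul h, one_div_mul_cancel hp0.ne',
      Real.rpow_one]
  have e2 : (fun s => f s * Real.log |(f s / I) ^ (1 / p)|) =ᵐ[μ]
      fun s => (1 / p) * (f s * Real.log (f s) - f s * Real.log I) := by
    filter_upwards [hf_nonneg] with s hs
    simp only [Pi.zero_apply] at hs
    rcases hs.eq_or_lt with h | h
    · simp [← h]
    · rw [Real.log_abs, Real.log_rpow (div_pos h hI), Real.log_div h.ne' hI.ne']
      ring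
  have i1 : Integrable (fun s => |(f s / I) ^ (1 / p)| ^ p) μ :=
    (hf.div_const I).congr e1.symm
  have v1 : (∫ s, |(f s / I) ^ (1 / p)| ^ p ∂μ) = 1 := by
    rw [integral_congr_ae e1, integral_div, hIdef, div_self hI.ne']
  have i2 : Integrable (fun s => f s * Real.log |(f s / I) ^ (1 / p)|) μ :=
    ((hflog.sub (hf.mul_const (Real.log I))).const_mul (1 / p)).congr e2.symm
  have v2 : (∫ s, f s * Real.log |(f s / I) ^ (1 / p)| ∂μ) = (1 / p) * Phi1 μ f := by
    rw [integral_congr_ae e2, integral_const_mul,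
      integral_sub hflog (hf.mul_const (Real.log I)), integral_mul_const, hIdef, hPhi]
  refine ⟨h1, ⟨hm, i1, v1, i2, v2⟩, ⟨_, hm, i1, v1.le, i2, ?_, v2.symm⟩, ?_⟩
  · filter_upwards [hf_nonneg] with s hs
    simp only [Pi.zero_apply] at hs
    rcases hs.eq_or_lt with h | h
    · exact Or.inl h.symm
    · exact Or.inr (Real.rpow_pos_of_pos (div_pos h hI) _).ne'
  · rintro r ⟨x, a, b, c, d, e, rfl⟩
    exact h1 x a b c d e
end

section
/- Let 1 ≤ p₀, p₁ < ∞, let t ∈ (0,1), and define p by 1/p = (1−t)/p₀ + t/p₁. Then for every nonnegative f ∈ L¹(μ) with f ≠ 0 and f·log f integrable, the indicators satisfy the linearity formula Φ_{L^p}(f) = (1−t)·Φ_{L^{p₀}}(f) + t·Φ_{L^{p₁}}(f). -/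
open MeasureTheory

/-- The indicator (entropy functional) of the Köthe space `L^q(μ)` (`1 ≤ q < ∞`):
`Φ_{L^q}(f) = sup { ∫ f·log|x| dμ : x ∈ L^q(μ), ‖x‖_q ≤ 1, f·log|x| integrable }`. -/
noncomputable def indicatorLp {S : Type*} [MeasurableSpace S] (μ : Measure S) (q : ℝ)
    (f : S → ℝ) : ℝ :=
  sSup {r : ℝ | ∃ x : S → ℝ, AEStronglyMeasurable x μ ∧ Integrable (fun s => |x s| ^ q) μ ∧
    (∫ s, |x s| ^ q ∂μ) ≤ 1 ∧
    Integrable (fun s => f s * Real.log |x s|) μ ∧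
    (∀ᵐ s ∂μ, f s = 0 ∨ x s ≠ 0) ∧
    r = ∫ s, f s * Real.log |x s| ∂μ}


lemma indicatorLp_eq {S : Type*} [MeasurableSpace S] (μ : Measure S) (q : ℝ) (hq : 0 < q)
    (f : S → ℝ) (hf : Integrable f μ) (hf_nonneg : 0 ≤ᵐ[μ] f) (hf_ne : ¬ f =ᵐ[μ] 0)
    (hflog : Integrable (fun s => f s * Real.log (f s)) μ) :
    indicatorLp μ q f = (1 / q) *
      ((∫ s, f s * Real.log (f s) ∂μ) - (∫ s, f s ∂μ) * Real.log (∫ s, f s ∂μ)) := by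
  have hF : 0 < ∫ s, f s ∂μ := by
    refine lt_of_le_of_ne (integral_nonneg_of_ae hf_nonneg) fun h => hf_ne ?_
    exact (integral_eq_zero_iff_of_nonneg_ae hf_nonneg hf).1 h.symm
  set F := ∫ s, f s ∂μ with hFdef
  have hI1 : Integrable (fun s => f s * Real.log (f s) - f s * Real.log F) μ :=
    hflog.sub (hf.mul_const _)
  have hv1 : ∫ s, (f s * Real.log (f s) - f s * Real.log F) ∂μ
      = (∫ s, f s * Real.log (f s) ∂μ) - F * Real.log F := by
    rw [integral_sub hflog (hf.mul_const _), integral_mul_const]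
  apply IsGreatest.csSup_eq
  constructor
  · have e1 : (fun s => |(f s / F) ^ (1 / q)| ^ q) =ᵐ[μ] fun s => f s / F := by
      filter_upwards [hf_nonneg] with s hs
      have h0 : 0 ≤ f s / F := div_nonneg hs hF.le
      rw [abs_of_nonneg (Real.rpow_nonneg h0 _), ← Real.rpow_mul h0, one_div,
        inv_mul_cancel₀ hq.ne', Real.rpow_one]
    have e2 : (fun s => f s * Real.log |(f s / F) ^ (1 / q)|) =ᵐ[μ]
        fun s => (1 / q) * (f s * Real.log (f s) - f s * Real.log F) := by
      filter_upwards [hf_nonneg] with s hs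
      rcases eq_or_lt_of_le hs with h | h
      · have h' : f s = 0 := h.symm
        simp [h']
      · have h' : 0 < f s := h
        rw [Real.log_abs, Real.log_rpow (div_pos h' hF), Real.log_div h'.ne' hF.ne']
        ring
    refine ⟨fun s => (f s / F) ^ (1 / q), ?_, ?_, ?_, ?_, ?_, ?_⟩
    · exact ((hf.aestronglyMeasurable.aemeasurable.div_const F).pow_const (1 / q)).aestronglyMeasurable
    · exact (hf.div_const F).congr e1.symm
    · rw [integral_congr_ae e1, integral_div, div_self hF.ne']
    · exact (hI1.const_mul (1 / q)).congr e2.symm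
    · filter_upwards [hf_nonneg] with s hs
      rcases eq_or_lt_of_le hs with h | h
      · exact Or.inl h.symm
      · exact Or.inr (Real.rpow_pos_of_pos (div_pos h hF) _).ne'
    · rw [integral_congr_ae e2, integral_const_mul, hv1]
  · rintro r ⟨x, hx, hxi, hx1, hlog, hne, rfl⟩
    have hle : ∫ s, q * (f s * Real.log |x s|) ∂μ ≤
        ∫ s, ((f s * Real.log (f s) - f s * Real.log F) + (F * |x s| ^ q - f s)) ∂μ := by
      refine integral_mono_ae (hlog.const_mul q) (hI1.add ((hxi.const_mul F).sub hf)) ?_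
      filter_upwards [hf_nonneg, hne] with s hs hn
      have hs' : 0 ≤ f s := hs
      rcases eq_or_lt_of_le hs' with h | h
      · simp only [← h]
        have := mul_nonneg hF.le (Real.rpow_nonneg (abs_nonneg (x s)) q)
        simpa using this
      · have hx0 : 0 < |x s| := abs_pos.2 (hn.resolve_left h.ne')
        have hy : 0 < |x s| ^ q := Real.rpow_pos_of_pos hx0 q
        have := Real.log_le_sub_one_of_pos (div_pos (mul_pos hF hy) h)
        rw [Real.log_div (mul_pos hF hy).ne' h.ne', Real.log_mul hF.ne' hy.ne',
          Real.log_rpow hx0] at this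
        have h2 := mul_le_mul_of_nonneg_left this hs'
        have h3 : f s * (F * |x s| ^ q / f s - 1) = F * |x s| ^ q - f s := by
          field_simp
        rw [h3] at h2
        show q * (f s * Real.log |x s|) ≤ _
        nlinarith
    have hI2 : Integrable (fun s => F * |x s| ^ q - f s) μ := (hxi.const_mul F).sub hf
    rw [integral_add hI1 hI2, hv1, integral_sub (hxi.const_mul F) hf,
      integral_const_mul, integral_const_mul] at hle
    have h4 : F * (∫ s, |x s| ^ q ∂μ) ≤ F * 1 := mul_le_mul_of_nonneg_left hx1 hF.le
    rw [one_div, ← div_eq_inv_mul, le_div_iff₀ hq]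
    linarith

theorem stmt2 {S : Type*} [MeasurableSpace S] (μ : Measure S) [SigmaFinite μ]
    (p₀ p₁ t p : ℝ) (hp₀ : 1 ≤ p₀) (hp₁ : 1 ≤ p₁) (ht : t ∈ Set.Ioo (0 : ℝ) 1)
    (hp : 1 / p = (1 - t) / p₀ + t / p₁)
    (f : S → ℝ) (hf : Integrable f μ) (hf_nonneg : 0 ≤ᵐ[μ] f) (hf_ne : ¬ f =ᵐ[μ] 0)
    (hflog : Integrable (fun s => f s * Real.log (f s)) μ) :
    indicatorLp μ p f = (1 - t) * indicatorLp μ p₀ f + t * indicatorLp μ p₁ f := by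
  have h0 : 0 < p₀ := by linarith
  have h1 : 0 < p₁ := by linarith
  have hpp : 0 < p := by
    rw [← one_div_pos, hp]
    exact add_pos (div_pos (by linarith [ht.2]) h0) (div_pos ht.1 h1)
  rw [indicatorLp_eq μ p hpp f hf hf_nonneg hf_ne hflog,
    indicatorLp_eq μ p₀ h0 f hf hf_nonneg hf_ne hflog,
    indicatorLp_eq μ p₁ h1 f hf hf_nonneg hf_ne hflog, hp]
  ring
end

section
/- Let f, g ∈ L¹(μ) be nonnegative and nonzero, with f·log f and g·log g integrable. Then (f+g)·log(f+g) is integrable and 0 ≤ Φ₁(f) + Φ₁(g) − Φ₁(f+g) ≤ (log 2)·(‖f‖₁ + ‖g‖₁). -/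
open MeasureTheory

theorem aux1 (a c : ℝ) (ha : 0 ≤ a) (hc : 0 < c) :
    a * Real.log c - a * Real.log a ≤ c - a := by
  rcases ha.eq_or_lt with rfl | ha
  · simp; exact hc.le
  · have h := Real.log_le_sub_one_of_pos (div_pos hc ha)
    rw [Real.log_div hc.ne' ha.ne'] at h
    have h2 := mul_le_mul_of_nonneg_left h ha.le
    have h3 : a * (c / a - 1) = c - a := by field_simp
    linarith

theorem aux2 (a b p q : ℝ) (ha : 0 ≤ a) (hb : 0 ≤ b) (hp : 0 < p) (hq : 0 < q)
    (hpq : p + q = 1) :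
    (a + b) * Real.log (a + b) - a * Real.log a - b * Real.log b
      ≤ a * (-Real.log p) + b * (-Real.log q) := by
  rcases (add_nonneg ha hb).eq_or_lt with h | h
  · have h1 : a = 0 := by linarith
    have h2 : b = 0 := by linarith
    simp [h1, h2]
  · have h1 := aux1 a (p * (a + b)) ha (mul_pos hp h)
    have h2 := aux1 b (q * (a + b)) hb (mul_pos hq h)
    rw [Real.log_mul hp.ne' h.ne'] at h1
    rw [Real.log_mul hq.ne' h.ne'] at h2
    have h3 : p * (a + b) + q * (a + b) = a + b := by rw [← add_mul, hpq, one_mul]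
    nlinarith

theorem aux3 (a b : ℝ) (ha : 0 ≤ a) (hb : 0 ≤ b) :
    (a + b) * Real.log (a + b) - a * Real.log a - b * Real.log b
      ≤ Real.log 2 * (a + b) := by
  have h := aux2 a b (1/2) (1/2) ha hb (by norm_num) (by norm_num) (by norm_num)
  have h2 : Real.log (1/2) = - Real.log 2 := by rw [one_div, Real.log_inv]
  rw [h2] at h
  linarith

theorem aux5 (a b : ℝ) (ha : 0 ≤ a) (hb : 0 ≤ b) : a * Real.log a ≤ a * Real.log (a + b) := by
  rcases ha.eq_or_lt with rfl | ha
  · simp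
  · exact mul_le_mul_of_nonneg_left (Real.log_le_log ha (by linarith)) ha.le

theorem aux4 (a b : ℝ) (ha : 0 ≤ a) (hb : 0 ≤ b) :
    0 ≤ (a + b) * Real.log (a + b) - a * Real.log a - b * Real.log b := by
  have h1 := aux5 a b ha hb
  have h2 := aux5 b a hb ha
  rw [add_comm b a] at h2
  linarith

theorem stmt3 {S : Type*} [MeasurableSpace S] (μ : Measure S) [SigmaFinite μ]
    (f g : S → ℝ) (hf : Integrable f μ) (hg : Integrable g μ)
    (hf_nonneg : 0 ≤ᵐ[μ] f) (hg_nonneg : 0 ≤ᵐ[μ] g)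
    (hf_ne : ¬ f =ᵐ[μ] 0) (hg_ne : ¬ g =ᵐ[μ] 0)
    (hflog : Integrable (fun s => f s * Real.log (f s)) μ)
    (hglog : Integrable (fun s => g s * Real.log (g s)) μ) :
    Integrable (fun s => (f s + g s) * Real.log (f s + g s)) μ ∧
    0 ≤ Phi1 μ f + Phi1 μ g - Phi1 μ (fun s => f s + g s) ∧
    Phi1 μ f + Phi1 μ g - Phi1 μ (fun s => f s + g s) ≤
      Real.log 2 * ((∫ s, f s ∂μ) + ∫ s, g s ∂μ) := by
  have hD : Integrable (fun s => (f s + g s) * Real.log (f s + g s) - f s * Real.log (f s)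
      - g s * Real.log (g s)) μ := by
    refine Integrable.mono' ((hf.add hg).const_mul (Real.log 2)) ?_ ?_
    · exact ((Real.continuous_mul_log.comp_aestronglyMeasurable (hf.add hg).1).sub hflog.1).sub
        hglog.1
    · filter_upwards [hf_nonneg, hg_nonneg] with s h1 h2
      rw [Real.norm_eq_abs, abs_of_nonneg (aux4 _ _ h1 h2)]
      exact aux3 _ _ h1 h2
  have hI : Integrable (fun s => (f s + g s) * Real.log (f s + g s)) μ := by
    refine ((hD.add hflog).add hglog).congr (Filter.Eventually.of_forall fun s => ?_)
    simp only [Pi.add_apply]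
    ring
  have hA : 0 < ∫ s, f s ∂μ := lt_of_le_of_ne (integral_nonneg_of_ae hf_nonneg)
    fun h => hf_ne ((integral_eq_zero_iff_of_nonneg_ae hf_nonneg hf).1 h.symm)
  have hB : 0 < ∫ s, g s ∂μ := lt_of_le_of_ne (integral_nonneg_of_ae hg_nonneg)
    fun h => hg_ne ((integral_eq_zero_iff_of_nonneg_ae hg_nonneg hg).1 h.symm)
  have hDint : ∫ s, ((f s + g s) * Real.log (f s + g s) - f s * Real.log (f s)
      - g s * Real.log (g s)) ∂μ = ∫ s, (f s + g s) * Real.log (f s + g s) ∂μ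
        - ∫ s, f s * Real.log (f s) ∂μ - ∫ s, g s * Real.log (g s) ∂μ := by
    rw [← integral_sub hI hflog]
    exact integral_sub (hI.sub hflog) hglog
  have hsum : ∫ s, (f s + g s) ∂μ = ∫ s, f s ∂μ + ∫ s, g s ∂μ := integral_add hf hg
  have hD0 : 0 ≤ ∫ s, ((f s + g s) * Real.log (f s + g s) - f s * Real.log (f s)
      - g s * Real.log (g s)) ∂μ := by
    apply integral_nonneg_of_ae
    filter_upwards [hf_nonneg, hg_nonneg] with s h1 h2
    exact aux4 _ _ h1 h2
  have hD1 : ∀ p q : ℝ, 0 < p → 0 < q → p + q = 1 →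
      ∫ s, ((f s + g s) * Real.log (f s + g s) - f s * Real.log (f s)
      - g s * Real.log (g s)) ∂μ ≤
        (∫ s, f s ∂μ) * (-Real.log p) + (∫ s, g s ∂μ) * (-Real.log q) := by
    intro p q hp hq hpq
    rw [← integral_mul_const, ← integral_mul_const,
      ← integral_add (hf.mul_const _) (hg.mul_const _)]
    refine integral_mono_ae hD ((hf.mul_const _).add (hg.mul_const _)) ?_
    filter_upwards [hf_nonneg, hg_nonneg] with s h1 h2
    exact aux2 _ _ p q h1 h2 hp hq hpq
  refine ⟨hI, ?_, ?_⟩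
  · unfold Phi1
    rw [hsum]
    rw [hDint] at hD1
    generalize (∫ s, f s ∂μ) = A at *
    generalize (∫ s, g s ∂μ) = B at *
    have hAB : 0 < A + B := by linarith
    have h := hD1 (A / (A + B)) (B / (A + B)) (by positivity) (by positivity) (by field_simp)
    rw [Real.log_div hA.ne' hAB.ne', Real.log_div hB.ne' hAB.ne'] at h
    linarith
  · have h := aux3 _ _ hA.le hB.le
    unfold Phi1
    rw [hsum]
    linarith
end

section
/- Let f, g ∈ L¹(μ) be nonnegative and nonzero, with f·log f and g·log g integrable. If in addition f·g = 0 μ-almost everywhere and ‖f‖₁ = ‖g‖₁, then Φ₁(f) + Φ₁(g) − Φ₁(f+g) = (log 2)·(‖f‖₁ + ‖g‖₁). Consequently the constant log 2 in the upper bound Φ₁(f) + Φ₁(g) − Φ₁(f+g) ≤ (log 2)(‖f‖₁+‖g‖₁) is optimal: the optimal constant δ(Φ₁) for the space L¹ equals log 2. -/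
open MeasureTheory

theorem stmt4 {S : Type*} [MeasurableSpace S] (μ : Measure S) [SigmaFinite μ]
    (f g : S → ℝ) (hf : Integrable f μ) (hg : Integrable g μ)
    (hf_nonneg : 0 ≤ᵐ[μ] f) (hg_nonneg : 0 ≤ᵐ[μ] g)
    (hf_ne : ¬ f =ᵐ[μ] 0) (hg_ne : ¬ g =ᵐ[μ] 0)
    (hflog : Integrable (fun s => f s * Real.log (f s)) μ)
    (hglog : Integrable (fun s => g s * Real.log (g s)) μ)
    (hdisj : ∀ᵐ s ∂μ, f s * g s = 0)
    (hnorm : (∫ s, f s ∂μ) = ∫ s, g s ∂μ) :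
    Phi1 μ f + Phi1 μ g - Phi1 μ (fun s => f s + g s) =
      Real.log 2 * ((∫ s, f s ∂μ) + ∫ s, g s ∂μ) ∧
    -- consequently, `log 2` is the optimal constant `δ(Φ₁)` for the space `L¹`:
    ∀ δ : ℝ,
      (∀ f' g' : S → ℝ, Integrable f' μ → Integrable g' μ →
        0 ≤ᵐ[μ] f' → 0 ≤ᵐ[μ] g' → ¬ f' =ᵐ[μ] 0 → ¬ g' =ᵐ[μ] 0 →
        Integrable (fun s => f' s * Real.log (f' s)) μ →
        Integrable (fun s => g' s * Real.log (g' s)) μ →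
        Phi1 μ f' + Phi1 μ g' - Phi1 μ (fun s => f' s + g' s) ≤
          δ * ((∫ s, f' s ∂μ) + ∫ s, g' s ∂μ)) →
      Real.log 2 ≤ δ := by
  have hlog : ∀ᵐ s ∂μ, (f s + g s) * Real.log (f s + g s) =
      f s * Real.log (f s) + g s * Real.log (g s) := by
    filter_upwards [hdisj] with s hs
    rcases mul_eq_zero.mp hs with h | h <;> simp [h]
  have hpos : 0 < ∫ s, f s ∂μ := by
    refine lt_of_le_of_ne (integral_nonneg_of_ae hf_nonneg) fun h => hf_ne ?_
    exact (integral_eq_zero_iff_of_nonneg_ae hf_nonneg hf).mp h.symm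
  have key : Phi1 μ f + Phi1 μ g - Phi1 μ (fun s => f s + g s) =
      Real.log 2 * ((∫ s, f s ∂μ) + ∫ s, g s ∂μ) := by
    unfold Phi1
    rw [integral_congr_ae hlog, integral_add hflog hglog, integral_add hf hg, ← hnorm,
      ← two_mul, Real.log_mul two_ne_zero hpos.ne']
    ring
  refine ⟨key, fun δ h => ?_⟩
  have h1 := h f g hf hg hf_nonneg hg_nonneg hf_ne hg_ne hflog hglog
  rw [key] at h1
  exact le_of_mul_le_mul_right h1 (by rw [← hnorm]; linarith)
end

section
/- Let L : C¹(ℝ) → C(ℝ) be any map (not assumed linear or continuous) from the continuously differentiable real-valued functions on ℝ to the continuous real-valued functions on ℝ which satisfies the Leibniz rule L(f·g) = f·(Lg) + g·(Lf) for all f, g ∈ C¹(ℝ). Then there exist continuous functions a, b ∈ C(ℝ) such that for every f ∈ C¹(ℝ) and every x ∈ ℝ, (Lf)(x) = a(x)·f′(x) + b(x)·f(x)·ln|f(x)|, where f(x)·ln|f(x)| is interpreted as 0 whenever f(x) = 0. -/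
open Set Filter Topology

lemma km_bump (x r : ℝ) (hr : 0 < r) : ∃ φ : ℝ → ℝ, ContDiff ℝ 1 φ ∧ HasCompactSupport φ ∧
    (∀ y, 0 ≤ φ y) ∧ (∀ y, φ y ≤ 1) ∧ (∀ y, |y - x| ≤ r / 2 → φ y = 1) ∧
    (∀ y, r ≤ |y - x| → φ y = 0) := by
  let f : ContDiffBump x := ⟨r / 2, r, by positivity, by linarith⟩
  refine ⟨f, f.contDiff, f.hasCompactSupport, fun y => f.nonneg, fun y => f.le_one, ?_, ?_⟩
  · intro y hy
    exact f.one_of_mem_closedBall (by simpa [Real.dist_eq] using hy)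
  · intro y hy
    exact f.zero_of_le_dist (by simpa [Real.dist_eq] using hy)

lemma km_disj (x0 δ y : ℝ) (hδ : 0 < δ) (n m : ℕ) (hnm : m ≠ n)
    (hy : |y - (x0 + δ / 2 ^ n)| < δ / 2 ^ n / 8) : δ / 2 ^ m / 4 ≤ |y - (x0 + δ / 2 ^ m)| := by
  have key : ∀ a b : ℕ, a < b → δ / 2 ^ b ≤ δ / 2 ^ a / 2 := by
    intro a b hab
    rw [div_div, ← pow_succ]
    exact div_le_div_of_nonneg_left hδ.le (by positivity)
      (pow_le_pow_right₀ (by norm_num) hab)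
  have hp : 0 < δ / 2 ^ n := by positivity
  have hq : 0 < δ / 2 ^ m := by positivity
  rw [abs_lt] at hy
  rcases lt_or_gt_of_ne hnm with h | h
  · have := key _ _ h
    rw [abs_sub_comm]
    refine le_trans ?_ (le_abs_self _)
    linarith
  · have := key _ _ h
    refine le_trans ?_ (le_abs_self _)
    linarith

lemma km_glide (x0 δ : ℝ) (hδ : 0 < δ) : ∃ ε : ℕ → ℝ, (∀ n, 0 < ε n) ∧
    ∀ c : ℕ → ℝ, (∀ n, |c n| ≤ ε n) → ∃ ψ : ℝ → ℝ, ContDiff ℝ 1 ψ ∧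
      ∀ n, ψ =ᶠ[𝓝 (x0 + δ / 2 ^ n)] fun _ => c n := by
  choose φ hφ hsupp h0 h1 hone hzero using
    fun n : ℕ => km_bump (x0 + δ / 2 ^ n) (δ / 2 ^ n / 4) (by positivity)
  have hb : ∀ n, ∃ M : ℝ, 0 < M ∧ ∀ k : ℕ, k ≤ 1 → ∀ x, ‖iteratedFDeriv ℝ k (φ n) x‖ ≤ M := by
    intro n
    obtain ⟨C0, hC0⟩ := ((hsupp n).iteratedFDeriv (𝕜 := ℝ) 0).exists_bound_of_continuous
      ((hφ n).continuous_iteratedFDeriv (m := 0) (by simp))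
    obtain ⟨C1, hC1⟩ := ((hsupp n).iteratedFDeriv (𝕜 := ℝ) 1).exists_bound_of_continuous
      ((hφ n).continuous_iteratedFDeriv (m := 1) (by simp))
    refine ⟨max (max C0 C1) 1, by positivity, ?_⟩
    intro k hk x
    interval_cases k
    · exact (hC0 x).trans ((le_max_left _ _).trans (le_max_left _ _))
    · exact (hC1 x).trans ((le_max_right _ _).trans (le_max_left _ _))
  choose M hM hMb using hb
  refine ⟨fun n => (1 / 2) ^ n / M n, fun n => div_pos (by positivity) (hM n), ?_⟩
  intro c hc
  refine ⟨fun x => ∑' n, c n • φ n x, ?_, ?_⟩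
  · have := contDiff_tsum (𝕜 := ℝ) (N := 1) (f := fun n x => c n • φ n x)
      (v := fun _ n => (1 / 2 : ℝ) ^ n)
      (fun n => by exact_mod_cast contDiff_const.smul (hφ n))
      (fun k _ => summable_geometric_two) ?_
    · exact_mod_cast this
    · intro k n x hk
      have hk' : k ≤ 1 := by exact_mod_cast hk
      rw [iteratedFDeriv_const_smul_apply'
        ((hφ n).contDiffAt.of_le (by exact_mod_cast hk')), norm_smul, Real.norm_eq_abs]
      calc |c n| * ‖iteratedFDeriv ℝ k (φ n) x‖ ≤ (1 / 2) ^ n / M n * M n :=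
            mul_le_mul (hc n) (hMb n k hk' x) (norm_nonneg _)
              (div_nonneg (by positivity) (hM n).le)
        _ = (1 / 2) ^ n := div_mul_cancel₀ _ (hM n).ne'
  · intro n
    have hp : 0 < δ / 2 ^ n / 8 := by positivity
    filter_upwards [Metric.ball_mem_nhds _ hp] with y hy
    rw [Metric.mem_ball, Real.dist_eq] at hy
    rw [tsum_eq_single n, hone n y (by linarith), smul_eq_mul, mul_one]
    intro m hm
    rw [hzero m y (km_disj x0 δ y hδ n m hm hy), smul_zero]

lemma km_additive (α : ℝ → ℝ) (hadd : ∀ s t, α (s + t) = α s + α t)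
    (hbad : ∃ c, α c ≠ c * α 1) (ε K : ℝ) (hε : 0 < ε) : ∃ c, |c| ≤ ε ∧ K ≤ |α c| := by
  by_contra! hcon
  obtain ⟨c, hc⟩ := hbad
  let A : ℝ →+ ℝ := AddMonoidHom.mk' α hadd
  have hA : Continuous A := by
    refine A.continuous_of_isBounded_nhds_zero (s := Metric.closedBall 0 ε)
      (Metric.closedBall_mem_nhds _ hε) ?_
    rw [isBounded_iff_forall_norm_le]
    refine ⟨K, ?_⟩
    rintro _ ⟨x, hx, rfl⟩
    exact (hcon x (by simpa using hx)).le
  have := map_real_smul A hA c 1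
  simp only [smul_eq_mul, mul_one] at this
  exact hc this

lemma km_half (h : ℝ → ℝ) (hh : ContDiff ℝ 1 h) (x0 : ℝ) (h0 : h x0 = 0) (h1 : deriv h x0 = 0) :
    ∃ k : ℝ → ℝ, ContDiff ℝ 1 k ∧ (∀ y ≤ x0, k y = 0) ∧ (∀ y, x0 ≤ y → k y = h y) := by
  let k : ℝ → ℝ := fun y => if y ≤ x0 then 0 else h y
  let k' : ℝ → ℝ := fun y => if y ≤ x0 then 0 else deriv h y
  have hk0 : ∀ y ≤ x0, k y = 0 := fun y hy => if_pos hy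
  have hk1 : ∀ y, x0 ≤ y → k y = h y := by
    intro y hy
    rcases hy.eq_or_lt with rfl | hy
    · rw [hk0 _ le_rfl, h0]
    · exact if_neg (not_le.2 hy)
  obtain ⟨hd, hc⟩ := contDiff_one_iff_deriv.1 hh
  have hder : ∀ y, HasDerivAt k (k' y) y := by
    intro y
    rcases lt_trichotomy y x0 with hy | rfl | hy
    · have : k' y = 0 := if_pos hy.le
      rw [this]
      refine (hasDerivAt_const y (0 : ℝ)).congr_of_eventuallyEq ?_
      filter_upwards [Iio_mem_nhds hy] with z hz using hk0 z (le_of_lt hz)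
    · have : k' y = 0 := if_pos le_rfl
      rw [this, ← hasDerivWithinAt_univ, ← Iic_union_Ici (a := y)]
      refine HasDerivWithinAt.union ?_ ?_
      · exact (hasDerivWithinAt_const y _ (0 : ℝ)).congr (fun z hz => hk0 z hz) (hk0 y le_rfl)
      · have := (hd y).hasDerivAt.hasDerivWithinAt (s := Ici y)
        rw [h1] at this
        exact this.congr (fun z hz => hk1 z hz) (hk1 y le_rfl)
    · have : k' y = deriv h y := if_neg (not_le.2 hy)
      rw [this]
      refine (hd y).hasDerivAt.congr_of_eventuallyEq ?_
      filter_upwards [Ioi_mem_nhds hy] with z hz using hk1 z (le_of_lt hz)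
  refine ⟨k, contDiff_one_iff_deriv.2 ⟨fun y => (hder y).differentiableAt, ?_⟩, hk0, hk1⟩
  rw [funext fun y => (hder y).deriv]
  refine Continuous.if_le continuous_const hc continuous_id continuous_const ?_
  intro y hy
  rw [show y = x0 from hy, h1]

/-- two continuous functions that agree on a set having `x` in its closure agree at `x` -/
lemma km_eq_of_closure {f g : ℝ → ℝ} (hf : Continuous f) (hg : Continuous g) {s : Set ℝ} {x : ℝ}
    (hx : x ∈ closure s) (h : ∀ y ∈ s, f y = g y) : f x = g x :=
  closure_minimal (t := {y | f y = g y}) h (isClosed_eq hf hg) hx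

section core
variable (S : (ℝ → ℝ) → ℝ → ℝ)

lemma km_vanish (hcont : ∀ f : ℝ → ℝ, ContDiff ℝ 1 f → Continuous (S f))
    (hloc : ∀ (f g : ℝ → ℝ) (x : ℝ), ContDiff ℝ 1 f → ContDiff ℝ 1 g → f =ᶠ[𝓝 x] g → S f x = S g x)
    (hzero : S (fun _ => 0) = fun _ => 0)
    (h : ℝ → ℝ) (hh : ContDiff ℝ 1 h) (x0 : ℝ) (h0 : h x0 = 0) (h1 : deriv h x0 = 0) :
    S h x0 = 0 := by
  obtain ⟨k, hk, hk0, hk1⟩ := km_half h hh x0 h0 h1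
  have e1 : S k x0 = 0 := by
    refine km_eq_of_closure (s := Iio x0) (g := fun _ => 0) (hcont k hk) continuous_const
      (by simp) ?_
    intro y hy
    rw [hloc k (fun _ => 0) y hk contDiff_const, hzero]
    filter_upwards [Iio_mem_nhds hy] with z hz using hk0 z (le_of_lt hz)
  rw [← e1]
  refine km_eq_of_closure (s := Ioi x0) (hcont h hh) (hcont k hk) (by simp) ?_
  intro y hy
  refine hloc h k y hh hk ?_
  filter_upwards [Ioi_mem_nhds hy] with z hz using (hk1 z (le_of_lt hz)).symm

lemma km_homog (hcont : ∀ f : ℝ → ℝ, ContDiff ℝ 1 f → Continuous (S f))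
    (hadd : ∀ f g : ℝ → ℝ, ContDiff ℝ 1 f → ContDiff ℝ 1 g → ∀ x,
      S (fun y => f y + g y) x = S f x + S g x)
    (hloc : ∀ (f g : ℝ → ℝ) (x : ℝ), ContDiff ℝ 1 f → ContDiff ℝ 1 g → f =ᶠ[𝓝 x] g → S f x = S g x)
    (φ : ℝ → ℝ) (hφ : ContDiff ℝ 1 φ) (c x : ℝ) : S (fun y => c * φ y) x = c * S φ x := by
  have hcφ : ∀ c : ℝ, ContDiff ℝ 1 fun y => c * φ y := fun c => contDiff_const.mul hφ
  by_contra hne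
  have hev : ∀ᶠ y in 𝓝 x, S (fun y => c * φ y) y ≠ c * S φ y :=
    (isOpen_ne_fun (hcont _ (hcφ c)) (continuous_const.mul (hcont _ hφ))).mem_nhds hne
  obtain ⟨δ, hδ, hball⟩ := Metric.eventually_nhds_iff.1 hev
  obtain ⟨ε, hε, hglide⟩ := km_glide x (δ / 2) (by positivity)
  have hex : ∀ n : ℕ, ∃ d : ℝ, |d| ≤ ε n ∧
      (n : ℝ) ≤ |S (fun y => d * φ y) (x + δ / 2 / 2 ^ n)| := by
    intro n
    refine km_additive (fun d => S (fun y => d * φ y) (x + δ / 2 / 2 ^ n)) ?_ ⟨c, ?_⟩ _ _ (hε n)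
    · intro s t
      rw [← hadd _ _ (hcφ s) (hcφ t)]
      simp only [add_mul]
    · simp only [one_mul]
      apply hball
      rw [Real.dist_eq, add_sub_cancel_left, abs_of_pos (by positivity)]
      calc δ / 2 / 2 ^ n ≤ δ / 2 := div_le_self (by positivity) (one_le_pow₀ (by norm_num))
        _ < δ := by linarith
  choose d hd hbig using hex
  obtain ⟨ψ, hψ, hψn⟩ := hglide d hd
  have hlim : Tendsto (fun n : ℕ => x + δ / 2 / 2 ^ n) atTop (𝓝 x) := by
    have h1 : Tendsto (fun n : ℕ => δ / 2 * (1 / 2 : ℝ) ^ n) atTop (𝓝 (δ / 2 * 0)) :=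
      (tendsto_pow_atTop_nhds_zero_of_lt_one (by norm_num) (by norm_num)).const_mul _
    have h2 := h1.const_add x
    rw [mul_zero, add_zero] at h2
    refine h2.congr fun n => ?_
    rw [one_div, inv_pow, div_eq_mul_inv (δ / 2)]
  have hψφ : ContDiff ℝ 1 fun y => ψ y * φ y := hψ.mul hφ
  have hl := (((hcont _ hψφ).tendsto x).comp hlim).abs
  refine not_tendsto_nhds_of_tendsto_atTop (f := fun n : ℕ =>
    |S (fun y => ψ y * φ y) (x + δ / 2 / 2 ^ n)|) ?_ _ hl
  refine tendsto_atTop_mono (fun n => ?_) tendsto_natCast_atTop_atTop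
  rw [hloc _ (fun y => d n * φ y) _ hψφ (hcφ _)]
  · exact hbig n
  · filter_upwards [hψn n] with y hy
    rw [hy]

lemma km_core (hcont : ∀ f : ℝ → ℝ, ContDiff ℝ 1 f → Continuous (S f))
    (hadd : ∀ f g : ℝ → ℝ, ContDiff ℝ 1 f → ContDiff ℝ 1 g → ∀ x,
      S (fun y => f y + g y) x = S f x + S g x)
    (hloc : ∀ (f g : ℝ → ℝ) (x : ℝ), ContDiff ℝ 1 f → ContDiff ℝ 1 g → f =ᶠ[𝓝 x] g → S f x = S g x) :
    ∃ a b : ℝ → ℝ, Continuous a ∧ Continuous b ∧ ∀ h : ℝ → ℝ, ContDiff ℝ 1 h → ∀ x,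
      S h x = a x * deriv h x + b x * h x := by
  have hhom := km_homog S hcont hadd hloc
  have hzero : S (fun _ => 0) = fun _ => 0 := by
    funext x
    have := hadd (fun _ => 0) (fun _ => 0) contDiff_const contDiff_const x
    simp only [add_zero] at this
    linarith
  have hc1 : ContDiff ℝ 1 fun _ : ℝ => (1 : ℝ) := contDiff_const
  have hid : ContDiff ℝ 1 fun y : ℝ => y := contDiff_id
  refine ⟨fun x => S (fun y => y) x - x * S (fun _ => 1) x, S fun _ => 1,
    (hcont _ hid).sub (continuous_id.mul (hcont _ hc1)), hcont _ hc1, ?_⟩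
  intro h hh x
  have hA : ContDiff ℝ 1 fun y => -deriv h x * y := contDiff_const.mul hid
  have hB : ContDiff ℝ 1 fun y : ℝ => (x * deriv h x - h x) * 1 := contDiff_const.mul hc1
  have e := km_vanish S hcont hloc hzero
    (fun y => h y + (-deriv h x * y + (x * deriv h x - h x) * 1)) (hh.add (hA.add hB)) x
    (by ring) (by
      have hd : HasDerivAt (fun y => h y + (-deriv h x * y + (x * deriv h x - h x) * 1))
          (deriv h x + (-deriv h x * 1)) x :=
        ((hh.differentiable one_ne_zero) x).hasDerivAt.add
          (((hasDerivAt_id x).const_mul _).add_const _)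
      rw [hd.deriv]; ring)
  rw [hadd h _ hh (hA.add hB), hadd _ _ hA hB, hhom _ hid, hhom _ hc1] at e
  linarith

end core

theorem stmt11 (L : (ℝ → ℝ) → (ℝ → ℝ))
    -- `L` maps `C¹(ℝ)` into `C(ℝ)` (no linearity or continuity of `L` is assumed)
    (hmaps : ∀ f : ℝ → ℝ, ContDiff ℝ 1 f → Continuous (L f))
    -- the Leibniz rule
    (hleibniz : ∀ f g : ℝ → ℝ, ContDiff ℝ 1 f → ContDiff ℝ 1 g →
      L (fun x => f x * g x) = fun x => f x * L g x + g x * L f x) :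
    ∃ a b : ℝ → ℝ, Continuous a ∧ Continuous b ∧
      ∀ f : ℝ → ℝ, ContDiff ℝ 1 f → ∀ x : ℝ,
        -- `f x * Real.log |f x|` is `0` when `f x = 0`, since `Real.log 0 = 0`
        L f x = a x * deriv f x + b x * (f x * Real.log |f x|) := by
  have hloc : ∀ (f g : ℝ → ℝ) (x : ℝ), ContDiff ℝ 1 f → ContDiff ℝ 1 g → f =ᶠ[𝓝 x] g →
      L f x = L g x := by
    intro f g x hf hg hfg
    obtain ⟨r, hr, hball⟩ := Metric.eventually_nhds_iff.1 hfg
    obtain ⟨φ, hφ, -, -, -, hone, hzero⟩ := km_bump x r hr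
    have e : (fun y => f y * φ y) = fun y => g y * φ y := by
      funext y
      by_cases hy : |y - x| < r
      · rw [hball (by rwa [Real.dist_eq])]
      · rw [hzero y (not_lt.1 hy), mul_zero, mul_zero]
    have e1 := congrFun (hleibniz f φ hf hφ) x
    have e2 := congrFun (hleibniz g φ hg hφ) x
    rw [e, e2] at e1
    have hx : φ x = 1 := hone x (by simp; positivity)
    simp only [hx, hfg.eq_of_nhds, one_mul] at e1
    linarith
  have hL1 : ∀ x, L (fun _ => 1) x = 0 := by
    intro x
    have := congrFun (hleibniz (fun _ => 1) (fun _ => 1) contDiff_const contDiff_const) x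
    simp only [one_mul] at this
    linarith
  have hLm1 : ∀ x, L (fun _ => -1) x = 0 := by
    intro x
    have := congrFun (hleibniz (fun _ => -1) (fun _ => -1) contDiff_const contDiff_const) x
    simp only [mul_neg, mul_one, neg_neg, hL1] at this
    linarith
  have hL0 : ∀ x, L (fun _ => 0) x = 0 := by
    intro x
    have := congrFun (hleibniz (fun _ => 0) (fun _ => 0) contDiff_const contDiff_const) x
    simpa using this
  have hneg : ∀ f : ℝ → ℝ, ContDiff ℝ 1 f → ∀ x, L (fun y => -f y) x = -L f x := by
    intro f hf x
    have := congrFun (hleibniz (fun _ => -1) f contDiff_const hf) x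
    simpa [hLm1] using this
  obtain ⟨a, b, ha, hb, hS⟩ := km_core (fun h x => L (fun y => Real.exp (h y)) x * Real.exp (-h x))
    (fun f hf => (hmaps _ hf.exp).mul hf.neg.exp.continuous)
    (by
      intro f g hf hg x
      have := congrFun (hleibniz _ _ hf.exp hg.exp) x
      simp only [Real.exp_add, this, neg_add]
      have h1 : Real.exp (f x) * Real.exp (-f x) = 1 := by rw [← Real.exp_add]; simp
      have h2 : Real.exp (g x) * Real.exp (-g x) = 1 := by rw [← Real.exp_add]; simp
      linear_combination (L (fun y => Real.exp (g y)) x * Real.exp (-g x)) * h1 +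
        (L (fun y => Real.exp (f y)) x * Real.exp (-f x)) * h2)
    (by
      intro f g x hf hg hfg
      have := hloc (fun y => Real.exp (f y)) (fun y => Real.exp (g y)) x hf.exp hg.exp
        (hfg.fun_comp Real.exp)
      simp only [this, hfg.eq_of_nhds])
  have hpos : ∀ f : ℝ → ℝ, ContDiff ℝ 1 f → ∀ x : ℝ, 0 < f x →
      L f x = a x * deriv f x + b x * (f x * Real.log |f x|) := by
    intro f hf x hx
    obtain ⟨r, hr, hball⟩ := Metric.eventually_nhds_iff.1
      ((isOpen_lt continuous_const hf.continuous).mem_nhds hx : ∀ᶠ y in 𝓝 x, 0 < f y)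
    obtain ⟨φ, hφ, -, h0, h1, hone, hzero⟩ := km_bump x r hr
    let g : ℝ → ℝ := fun y => f y * φ y + (1 - φ y)
    have hg : ContDiff ℝ 1 g := (hf.mul hφ).add (contDiff_const.sub hφ)
    have hgpos : ∀ y, 0 < g y := by
      intro y
      by_cases hy : |y - x| < r
      · have hfy : 0 < f y := hball (by rwa [Real.dist_eq])
        rcases (h0 y).eq_or_lt with h | h
        · simp [g, ← h]
        · have := mul_pos hfy h
          have := h1 y
          simp only [g]; linarith
      · simp [g, hzero y (not_lt.1 hy)]
    have hfg : g =ᶠ[𝓝 x] f := by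
      filter_upwards [Metric.ball_mem_nhds x (half_pos hr)] with y hy
      rw [Metric.mem_ball, Real.dist_eq] at hy
      simp [g, hone y hy.le]
    have hh : ContDiff ℝ 1 fun y => Real.log (g y) := hg.log fun y => (hgpos y).ne'
    have e := hS _ hh x
    have e2 : (fun y => Real.exp (Real.log (g y))) = g := funext fun y => Real.exp_log (hgpos y)
    have e3 : deriv (fun y => Real.log (g y)) x = deriv f x / f x := by
      rw [deriv.log ((hg.differentiable one_ne_zero) x) (hgpos x).ne', hfg.deriv_eq,
        hfg.eq_of_nhds]
    simp only [e2, e3, Real.exp_neg, Real.exp_log (hgpos x)] at e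
    rw [hloc g f x hg hf hfg, hfg.eq_of_nhds] at e
    rw [abs_of_pos hx]
    field_simp at e
    linarith
  refine ⟨a, b, ha, hb, ?_⟩
  have hne : ∀ f : ℝ → ℝ, ContDiff ℝ 1 f → ∀ x : ℝ, f x ≠ 0 →
      L f x = a x * deriv f x + b x * (f x * Real.log |f x|) := by
    intro f hf x hx
    rcases lt_or_gt_of_ne hx with h | h
    · have e := hpos (fun y => -f y) hf.neg x (by linarith)
      rw [hneg f hf, deriv.fun_neg, abs_neg] at e
      linarith
    · exact hpos f hf x h
  intro f hf x
  by_cases hx : x ∈ closure {y | f y ≠ 0}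
  · refine km_eq_of_closure (g := fun x => a x * deriv f x + b x * (f x * Real.log |f x|))
      (hmaps f hf) ?_ hx (fun y hy => hne f hf y hy)
    have hc : Continuous fun x => f x * Real.log |f x| := by
      simp only [Real.log_abs]
      exact Real.continuous_mul_log.comp hf.continuous
    exact (ha.mul (contDiff_one_iff_deriv.1 hf).2).add (hb.mul hc)
  · have hz : f =ᶠ[𝓝 x] fun _ => 0 := by
      filter_upwards [isClosed_closure.isOpen_compl.mem_nhds hx] with y hy
      by_contra h
      exact hy (subset_closure h)
    rw [hloc f _ x hf contDiff_const hz, hL0, hz.deriv_eq, hz.eq_of_nhds]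
    simp
end

section
/- There exist constants ε > 0 and C < ∞ with the following property. Let φ : ℝ → ℝ be locally integrable and suppose that for every bounded interval I = [α, β] with α < β one has (1/|I|)·∫_I |φ(x) − φ_I| dx ≤ ε, where φ_I = (1/|I|)·∫_I φ(x) dx and |I| = β − α (that is, the BMO seminorm of φ is at most ε). Then the weight w = e^φ satisfies the A₂ condition with constant C: for every bounded interval I with |I| > 0, e^φ and e^{−φ} are integrable on I and ((1/|I|)·∫_I e^{φ(x)} dx)·((1/|I|)·∫_I e^{−φ(x)} dx) ≤ C. -/
open MeasureTheory

/-- average over an interval -/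
noncomputable def avgI (φ : ℝ → ℝ) (a b : ℝ) : ℝ := (b - a)⁻¹ * ∫ y in a..b, φ y

/-- dyadic averages of `φ` at depth `n` below `(a, b]` -/
noncomputable def dyad (φ : ℝ → ℝ) : ℕ → ℝ → ℝ → ℝ → ℝ
  | 0, a, b, _ => avgI φ a b
  | n + 1, a, b, x =>
    if x ≤ (a + b) / 2 then dyad φ n a ((a + b) / 2) x else dyad φ n ((a + b) / 2) b x

lemma dyad_meas (φ : ℝ → ℝ) (n : ℕ) : ∀ a b, Measurable (dyad φ n a b) := by
  induction n with
  | zero => intro a b; exact measurable_const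
  | succ n ih =>
    intro a b
    exact Measurable.ite measurableSet_Iic (ih _ _) (ih _ _)

lemma dyad_spec (φ : ℝ → ℝ) (n : ℕ) : ∀ a b x, x ∈ Set.Ioc a b →
    ∃ p, x ∈ Set.Ioc p (p + (b - a) / 2 ^ n) ∧
      dyad φ n a b x = avgI φ p (p + (b - a) / 2 ^ n) := by
  induction n with
  | zero => intro a b x hx; exact ⟨a, by simpa using hx, by simp [dyad]⟩
  | succ n ih =>
    intro a b x hx
    by_cases h : x ≤ (a + b) / 2
    · obtain ⟨p, h1, h2⟩ := ih a ((a + b) / 2) x ⟨hx.1, h⟩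
      have e : ((a + b) / 2 - a) / 2 ^ n = (b - a) / 2 ^ (n + 1) := by
        field_simp; ring
      rw [e] at h1 h2
      exact ⟨p, h1, by simp only [dyad, if_pos h, h2]⟩
    · obtain ⟨p, h1, h2⟩ := ih ((a + b) / 2) b x ⟨not_le.1 h, hx.2⟩
      have e : (b - (a + b) / 2) / 2 ^ n = (b - a) / 2 ^ (n + 1) := by
        field_simp; ring
      rw [e] at h1 h2
      exact ⟨p, h1, by simp only [dyad, if_neg h, h2]⟩

lemma dyad_tendsto (φ : ℝ → ℝ) (hφ : LocallyIntegrable φ volume) (a b : ℝ) (hab : a < b) :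
    ∀ᵐ x, x ∈ Set.Ioc a b →
      Filter.Tendsto (fun n => dyad φ n a b x) Filter.atTop (nhds (φ x)) := by
  filter_upwards [IsUnifLocDoublingMeasure.ae_tendsto_average volume hφ 1] with x hx hxI
  choose p h1 h2 using fun n => dyad_spec φ n a b x hxI
  have hpos : ∀ n : ℕ, 0 < (b - a) / 2 ^ n := fun n => by
    have := sub_pos.2 hab
    positivity
  have ht : Filter.Tendsto (fun n : ℕ => (b - a) / 2 ^ n / 2) Filter.atTop (nhds 0) := by
    have := (tendsto_pow_atTop_nhds_zero_of_lt_one (r := (1 / 2 : ℝ)) (by norm_num)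
      (by norm_num)).const_mul ((b - a) / 2)
    rw [mul_zero] at this
    refine this.congr fun n => ?_
    rw [one_div, inv_pow]; ring
  have := hx (l := Filter.atTop) (fun n => p n + (b - a) / 2 ^ n / 2)
    (fun n => (b - a) / 2 ^ n / 2)
    (tendsto_nhdsWithin_iff.2 ⟨ht, Filter.Eventually.of_forall fun n => half_pos (hpos n)⟩)
    (Filter.Eventually.of_forall fun n => by
      have := h1 n
      rw [Metric.mem_closedBall, Real.dist_eq, abs_le]
      constructor <;> linarith [this.1, this.2])
  refine this.congr fun n => ?_
  rw [h2 n, avgI, Real.closedBall_eq_Icc, setAverage_eq, integral_Icc_eq_integral_Ioc,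
    intervalIntegral.integral_of_le (by linarith [hpos n])]
  have e1 : p n + (b - a) / 2 ^ n / 2 - (b - a) / 2 ^ n / 2 = p n := by ring
  have e2 : p n + (b - a) / 2 ^ n / 2 + (b - a) / 2 ^ n / 2 = p n + (b - a) / 2 ^ n := by ring
  rw [e1, e2, Real.volume_real_Icc_of_le (by linarith [hpos n])]
  rfl

/-- threshold for the seminorm -/
noncomputable def epsJN : ℝ := (2 * Real.exp 2)⁻¹
/-- slope of the affine majorant -/
noncomputable def slopeJN : ℝ := 2 * Real.exp 2 * Real.exp 1

lemma key_step (φ : ℝ → ℝ) (hφ : LocallyIntegrable φ volume)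
    (hB : ∀ a b : ℝ, a < b → ∫ x in a..b, |φ x - avgI φ a b| ≤ epsJN * (b - a))
    (L : ENNReal) (a b c : ℝ) (hab : a < b)
    (hL : ∀ c, ∫ x in a..b, |φ x - c| ≤ b - a → L ≤ ENNReal.ofReal
      (Real.exp c * (Real.exp 1 * (b - a) + slopeJN * ∫ x in a..b, |φ x - c|)))
    (hc : ∫ x in a..b, |φ x - c| ≤ 2 * (b - a)) :
    L ≤ ENNReal.ofReal
      (Real.exp c * (Real.exp 1 * (b - a) + slopeJN * ∫ x in a..b, |φ x - c|)) := by
  by_cases h : ∫ x in a..b, |φ x - c| ≤ b - a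
  · exact hL c h
  push Not at h
  have hba : 0 < b - a := sub_pos.2 hab
  have he2 : 0 < Real.exp 2 := Real.exp_pos _
  have hint : IntervalIntegrable φ volume a b := (hφ.integrableOn_isCompact isCompact_uIcc).intervalIntegrable
  have heps : epsJN ≤ 1 := by
    unfold epsJN
    apply inv_le_one_of_one_le₀
    linarith [Real.add_one_le_exp (2 : ℝ)]
  have h1 := hB a b hab
  have h2 := hL (avgI φ a b) (by nlinarith)
  refine h2.trans (ENNReal.ofReal_le_ofReal ?_)
  have hs : 0 < slopeJN := by unfold slopeJN; positivity
  have hd : avgI φ a b - c ≤ 2 := by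
    have e : ∫ x in a..b, (φ x - c) = (b - a) * (avgI φ a b - c) := by
      rw [intervalIntegral.integral_sub hint (by simp)]
      simp [avgI]; field_simp
    have : ∫ x in a..b, (φ x - c) ≤ ∫ x in a..b, |φ x - c| :=
      intervalIntegral.integral_mono_on hab.le (hint.sub (by simp)) (hint.sub (by simp)).abs
        (fun x _ => le_abs_self _)
    rw [e] at this
    nlinarith
  have hexp : Real.exp (avgI φ a b) ≤ Real.exp c * Real.exp 2 := by
    rw [← Real.exp_add]; exact Real.exp_le_exp.2 (by linarith)
  have hid : Real.exp 2 * (Real.exp 1 * (b - a) + slopeJN * (epsJN * (b - a)))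
      = slopeJN * (b - a) := by
    unfold slopeJN epsJN; field_simp; ring
  calc _ ≤ (Real.exp c * Real.exp 2) *
        (Real.exp 1 * (b - a) + slopeJN * (epsJN * (b - a))) := by
        refine mul_le_mul hexp ?_ ?_ (by positivity)
        · gcongr
        · have : 0 ≤ ∫ x in a..b, |φ x - avgI φ a b| :=
            intervalIntegral.integral_nonneg hab.le fun _ _ => abs_nonneg _
          positivity
    _ = Real.exp c * (slopeJN * (b - a)) := by rw [mul_assoc, hid]
    _ ≤ _ := by
        gcongr
        have := mul_le_mul_of_nonneg_left h.le hs.le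
        have : 0 ≤ Real.exp 1 * (b - a) := by positivity
        linarith

lemma dyad_bound (φ : ℝ → ℝ) (hφ : LocallyIntegrable φ volume)
    (hB : ∀ a b : ℝ, a < b → ∫ x in a..b, |φ x - avgI φ a b| ≤ epsJN * (b - a))
    (n : ℕ) : ∀ a b, a < b → ∀ c, ∫ x in a..b, |φ x - c| ≤ b - a →
      ∫⁻ x in Set.Ioc a b, ENNReal.ofReal (Real.exp (dyad φ n a b x)) ≤ ENNReal.ofReal
      (Real.exp c * (Real.exp 1 * (b - a) + slopeJN * ∫ x in a..b, |φ x - c|)) := by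
  have hs : 0 < slopeJN := by unfold slopeJN; positivity
  have hint : ∀ a b, IntervalIntegrable φ volume a b := fun a b => (hφ.integrableOn_isCompact isCompact_uIcc).intervalIntegrable
  have hint' : ∀ c a b, IntervalIntegrable (fun x => |φ x - c|) volume a b :=
    fun c a b => ((hint a b).sub (by simp)).abs
  have hnn : ∀ c a b, a < b → 0 ≤ ∫ x in a..b, |φ x - c| := fun c a b hab =>
    intervalIntegral.integral_nonneg hab.le fun _ _ => abs_nonneg _
  induction n with
  | zero =>
    intro a b hab c hc
    have hba : 0 < b - a := sub_pos.2 hab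
    simp only [dyad, lintegral_const, Measure.restrict_apply MeasurableSet.univ, Set.univ_inter,
      Real.volume_Ioc]
    rw [← ENNReal.ofReal_mul (Real.exp_pos _).le]
    apply ENNReal.ofReal_le_ofReal
    have hd : avgI φ a b - c ≤ 1 := by
      have e : ∫ x in a..b, (φ x - c) = (b - a) * (avgI φ a b - c) := by
        rw [intervalIntegral.integral_sub (hint a b) (by simp)]
        simp [avgI]; field_simp
      have : ∫ x in a..b, (φ x - c) ≤ ∫ x in a..b, |φ x - c| :=
        intervalIntegral.integral_mono_on hab.le ((hint a b).sub (by simp)) (hint' c a b)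
          (fun x _ => le_abs_self _)
      rw [e] at this
      nlinarith
    have hexp : Real.exp (avgI φ a b) ≤ Real.exp c * Real.exp 1 := by
      rw [← Real.exp_add]; exact Real.exp_le_exp.2 (by linarith)
    have h0 := hnn c a b hab
    calc _ ≤ Real.exp c * Real.exp 1 * (b - a) := by gcongr
      _ ≤ _ := by
        rw [mul_assoc]
        gcongr
        have : 0 ≤ slopeJN * ∫ x in a..b, |φ x - c| := by positivity
        linarith
  | succ n ih =>
    intro a b hab c hc
    obtain ⟨m, hm⟩ : ∃ m, m = (a + b) / 2 := ⟨_, rfl⟩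
    have ham : a < m := by linarith
    have hmb : m < b := by linarith
    have hadd := intervalIntegral.integral_add_adjacent_intervals (hint' c a m) (hint' c m b)
    have n1 := hnn c a m ham
    have n2 := hnn c m b hmb
    have k1 := key_step φ hφ hB _ a m c ham (ih a m ham) (by linarith)
    have k2 := key_step φ hφ hB _ m b c hmb (ih m b hmb) (by linarith)
    rw [← Set.Ioc_union_Ioc_eq_Ioc ham.le hmb.le, lintegral_union measurableSet_Ioc
      (Set.Ioc_disjoint_Ioc_of_le le_rfl)]
    have e1 : ∫⁻ x in Set.Ioc a m, ENNReal.ofReal (Real.exp (dyad φ (n + 1) a b x))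
        = ∫⁻ x in Set.Ioc a m, ENNReal.ofReal (Real.exp (dyad φ n a m x)) :=
      setLIntegral_congr_fun measurableSet_Ioc fun x hx => by
        simp only [dyad, ← hm, if_pos hx.2]
    have e2 : ∫⁻ x in Set.Ioc m b, ENNReal.ofReal (Real.exp (dyad φ (n + 1) a b x))
        = ∫⁻ x in Set.Ioc m b, ENNReal.ofReal (Real.exp (dyad φ n m b x)) :=
      setLIntegral_congr_fun measurableSet_Ioc fun x hx => by
        simp only [dyad, ← hm, if_neg (not_le.2 hx.1)]
    rw [e1, e2]
    refine (add_le_add k1 k2).trans ?_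
    have p1 : 0 < m - a := by linarith
    have p2 : 0 < b - m := by linarith
    rw [← ENNReal.ofReal_add (by positivity) (by positivity)]
    apply ENNReal.ofReal_le_ofReal
    rw [← hadd]
    apply le_of_eq
    ring

lemma exp_bound (φ : ℝ → ℝ) (hφ : LocallyIntegrable φ volume)
    (hB : ∀ a b : ℝ, a < b → ∫ x in a..b, |φ x - avgI φ a b| ≤ epsJN * (b - a))
    (a b : ℝ) (hab : a < b) :
    IntegrableOn (fun x => Real.exp (φ x)) (Set.Ioc a b) volume ∧
    (b - a)⁻¹ * ∫ x in a..b, Real.exp (φ x) ≤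
      Real.exp (avgI φ a b) * (Real.exp 1 + slopeJN) := by
  have hs : 0 < slopeJN := by unfold slopeJN; positivity
  have hba : 0 < b - a := sub_pos.2 hab
  have heps : epsJN ≤ 1 := by
    unfold epsJN
    apply inv_le_one_of_one_le₀
    linarith [Real.add_one_le_exp (2 : ℝ)]
  have hu : ∫ x in a..b, |φ x - avgI φ a b| ≤ b - a := by
    have := hB a b hab
    nlinarith
  have hR : 0 ≤ Real.exp (avgI φ a b) * (Real.exp 1 + slopeJN) * (b - a) := by positivity
  have hlim : ∫⁻ x in Set.Ioc a b, ENNReal.ofReal (Real.exp (φ x)) ≤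
      ENNReal.ofReal (Real.exp (avgI φ a b) * (Real.exp 1 + slopeJN) * (b - a)) := by
    have hae : ∀ᵐ x ∂(volume.restrict (Set.Ioc a b)),
        ENNReal.ofReal (Real.exp (φ x)) = Filter.liminf
          (fun n => ENNReal.ofReal (Real.exp (dyad φ n a b x))) Filter.atTop := by
      rw [ae_restrict_iff' measurableSet_Ioc]
      filter_upwards [dyad_tendsto φ hφ a b hab] with x hx hxI
      exact (((ENNReal.continuous_ofReal.comp Real.continuous_exp).tendsto _).comp
        (hx hxI)).liminf_eq.symm
    rw [lintegral_congr_ae hae]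
    refine (lintegral_liminf_le fun n =>
      ((dyad_meas φ n a b).exp).ennreal_ofReal).trans ?_
    refine Filter.liminf_le_of_le (by isBoundedDefault) fun r hr => ?_
    obtain ⟨n, hn⟩ := hr.exists
    refine hn.trans ((dyad_bound φ hφ hB n a b hab _ hu).trans (ENNReal.ofReal_le_ofReal ?_))
    rw [mul_assoc, add_mul]
    gcongr
  have hm : AEStronglyMeasurable (fun x => Real.exp (φ x)) (volume.restrict (Set.Ioc a b)) :=
    Real.continuous_exp.comp_aestronglyMeasurable hφ.aestronglyMeasurable.restrict
  refine ⟨⟨hm, ?_⟩, ?_⟩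
  · rw [hasFiniteIntegral_iff_ofReal (Filter.Eventually.of_forall fun x => (Real.exp_pos _).le)]
    exact hlim.trans_lt ENNReal.ofReal_lt_top
  · rw [intervalIntegral.integral_of_le hab.le, integral_eq_lintegral_of_nonneg_ae
      (Filter.Eventually.of_forall fun x => (Real.exp_pos _).le) hm, inv_mul_le_iff₀ hba, mul_comm]
    exact ENNReal.toReal_le_of_le_ofReal hR hlim

theorem stmt12 :
    ∃ ε C : ℝ, 0 < ε ∧
      ∀ φ : ℝ → ℝ, LocallyIntegrable φ volume →
        -- the BMO seminorm of `φ` is at most `ε`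
        (∀ a b : ℝ, a < b →
          (b - a)⁻¹ * (∫ x in a..b, |φ x - (b - a)⁻¹ * ∫ y in a..b, φ y|) ≤ ε) →
        -- then `w = e^φ` is an `A₂` weight with constant `C`
        ∀ a b : ℝ, a < b →
          IntegrableOn (fun x => Real.exp (φ x)) (Set.Ioc a b) volume ∧
          IntegrableOn (fun x => Real.exp (-φ x)) (Set.Ioc a b) volume ∧
          ((b - a)⁻¹ * ∫ x in a..b, Real.exp (φ x)) *
            ((b - a)⁻¹ * ∫ x in a..b, Real.exp (-φ x)) ≤ C := by
  refine ⟨epsJN, (Real.exp 1 + slopeJN) ^ 2, by unfold epsJN; positivity, ?_⟩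
  intro φ hφ hB a b hab
  have hs : 0 < slopeJN := by unfold slopeJN; positivity
  have hba : 0 < b - a := sub_pos.2 hab
  have hB1 : ∀ a b : ℝ, a < b → ∫ x in a..b, |φ x - avgI φ a b| ≤ epsJN * (b - a) := by
    intro a b hab
    have := hB a b hab
    rw [inv_mul_le_iff₀ (sub_pos.2 hab), mul_comm (b - a) epsJN] at this
    exact this
  have hneg : ∀ a b, avgI (fun x => -φ x) a b = -avgI φ a b := by
    intro a b; simp [avgI]
  have hB2 : ∀ a b : ℝ, a < b →
      ∫ x in a..b, |(fun x => -φ x) x - avgI (fun x => -φ x) a b| ≤ epsJN * (b - a) := by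
    intro a b hab
    refine le_trans (le_of_eq ?_) (hB1 a b hab)
    congr 1
    funext x
    rw [hneg, ← abs_neg]
    congr 1
    ring
  obtain ⟨i1, b1⟩ := exp_bound φ hφ hB1 a b hab
  obtain ⟨i2, b2⟩ := exp_bound (fun x => -φ x) hφ.neg hB2 a b hab
  refine ⟨i1, i2, ?_⟩
  have hn : 0 ≤ (b - a)⁻¹ * ∫ x in a..b, Real.exp (-φ x) :=
    mul_nonneg (by positivity)
      (intervalIntegral.integral_nonneg hab.le fun _ _ => (Real.exp_pos _).le)
  refine (mul_le_mul b1 b2 hn (by positivity)).trans (le_of_eq ?_)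
  rw [hneg, Real.exp_neg]
  have := Real.exp_pos (avgI φ a b)
  field_simp
end

section
/- For every K < ∞ there is a constant C = C(K) < ∞ with the following property. Let w : ℝ → (0, ∞) be measurable with w and w^{-1} locally integrable, and suppose that for every bounded interval I = [α, β] with α < β one has ((1/|I|)·∫_I w(x) dx)·((1/|I|)·∫_I w(x)^{-1} dx) ≤ K (that is, w satisfies the A₂ condition with constant K). Then log w is locally integrable and for every bounded interval I of positive length, (1/|I|)·∫_I |log w(x) − (log w)_I| dx ≤ C, where (log w)_I = (1/|I|)·∫_I log w(x) dx. (That is, the logarithm of an A₂ weight belongs to BMO.) -/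
open MeasureTheory

lemma abs_log_le_aux (y : ℝ) (hy : 0 < y) : |Real.log y| ≤ y + y⁻¹ := by
  have h1 := Real.log_le_sub_one_of_pos hy
  have h2 := Real.log_le_sub_one_of_pos (inv_pos.2 hy)
  rw [Real.log_inv] at h2
  have := inv_pos.2 hy
  rw [abs_le]
  constructor <;> linarith

theorem stmt13 (K : ℝ) :
    ∃ C : ℝ,
      ∀ w : ℝ → ℝ, Measurable w → (∀ x, 0 < w x) →
        LocallyIntegrable w volume → LocallyIntegrable (fun x => (w x)⁻¹) volume →
        -- `w` satisfies the `A₂` condition with constant `K`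
        (∀ a b : ℝ, a < b →
          ((b - a)⁻¹ * ∫ x in a..b, w x) * ((b - a)⁻¹ * ∫ x in a..b, (w x)⁻¹) ≤ K) →
        -- then `log w ∈ BMO` with seminorm at most `C`
        LocallyIntegrable (fun x => Real.log (w x)) volume ∧
        ∀ a b : ℝ, a < b →
          (b - a)⁻¹ *
              (∫ x in a..b, |Real.log (w x) - (b - a)⁻¹ * ∫ y in a..b, Real.log (w y)|) ≤
            C := by
  refine ⟨2 * (1 + K), fun w hm hpos hw hwi hA => ?_⟩
  have hlog : LocallyIntegrable (fun x => Real.log (w x)) volume := by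
    refine (hw.add hwi).mono (Real.measurable_log.comp hm).aestronglyMeasurable ?_
    refine Filter.Eventually.of_forall fun x => ?_
    have h := abs_log_le_aux (w x) (hpos x)
    simp only [Real.norm_eq_abs, Pi.add_apply]
    exact h.trans (le_abs_self _)
  refine ⟨hlog, fun a b hab => ?_⟩
  have key : ∀ f : ℝ → ℝ, LocallyIntegrable f volume → IntervalIntegrable f volume a b :=
    fun f hf => (hf.integrableOn_isCompact isCompact_uIcc).intervalIntegrable
  have iw := key _ hw
  have iwi := key _ hwi
  have il := key _ hlog
  have hL : 0 < b - a := sub_pos.2 hab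
  have hL' : (b - a)⁻¹ * (b - a) = 1 := inv_mul_cancel₀ hL.ne'
  have hLi : 0 < (b - a)⁻¹ := inv_pos.2 hL
  have hK := hA a b hab
  have hIpos : 0 < ∫ x in a..b, w x :=
    intervalIntegral.intervalIntegral_pos_of_pos iw hpos hab
  set A := (b - a)⁻¹ * ∫ x in a..b, w x with hAdef
  have hApos : 0 < A := mul_pos hLi hIpos
  set m := (b - a)⁻¹ * ∫ y in a..b, Real.log (w y) with hmdef
  set c := Real.log A with hc
  have ic : IntervalIntegrable (fun x => Real.log (w x) - c) volume a b :=
    il.sub intervalIntegrable_const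
  have iB : IntervalIntegrable (fun x => A⁻¹ * w x + A * (w x)⁻¹) volume a b :=
    (iw.const_mul _).add (iwi.const_mul _)
  have hD : (b - a)⁻¹ * ∫ x in a..b, |Real.log (w x) - c| ≤ 1 + K := by
    have h1 : ∫ x in a..b, |Real.log (w x) - c| ≤
        ∫ x in a..b, (A⁻¹ * w x + A * (w x)⁻¹) := by
      refine intervalIntegral.integral_mono hab.le ic.abs iB fun x => ?_
      have h := abs_log_le_aux (A⁻¹ * w x) (mul_pos (inv_pos.2 hApos) (hpos x))
      rw [Real.log_mul (inv_pos.2 hApos).ne' (hpos x).ne', Real.log_inv, mul_inv A⁻¹ (w x), inv_inv A] at h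
      have e : Real.log (w x) - c = -Real.log A + Real.log (w x) := by rw [hc]; ring
      simp only [e]
      exact h
    rw [intervalIntegral.integral_add (iw.const_mul _) (iwi.const_mul _),
      intervalIntegral.integral_const_mul, intervalIntegral.integral_const_mul] at h1
    calc _ ≤ (b - a)⁻¹ * (A⁻¹ * (∫ x in a..b, w x) + A * ∫ x in a..b, (w x)⁻¹) :=
          mul_le_mul_of_nonneg_left h1 hLi.le
      _ = A⁻¹ * A + A * ((b - a)⁻¹ * ∫ x in a..b, (w x)⁻¹) := by
          conv_rhs => rw [show A⁻¹ * A = A⁻¹ * ((b - a)⁻¹ * ∫ x in a..b, w x) from rfl]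
          ring
      _ ≤ 1 + K := by
          rw [inv_mul_cancel₀ hApos.ne']
          linarith
  have hcm : |c - m| ≤ (b - a)⁻¹ * ∫ x in a..b, |Real.log (w x) - c| := by
    have e : m - c = (b - a)⁻¹ * ∫ x in a..b, (Real.log (w x) - c) := by
      rw [intervalIntegral.integral_sub il intervalIntegrable_const,
        intervalIntegral.integral_const, smul_eq_mul, mul_sub, ← mul_assoc, hL', one_mul]
    rw [abs_sub_comm, e, abs_mul, abs_of_pos hLi]
    exact mul_le_mul_of_nonneg_left
      (intervalIntegral.abs_integral_le_integral_abs hab.le) hLi.le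
  have h2 : ∫ x in a..b, |Real.log (w x) - m| ≤
      ∫ x in a..b, (|Real.log (w x) - c| + |c - m|) := by
    refine intervalIntegral.integral_mono hab.le (il.sub intervalIntegrable_const).abs
      (ic.abs.add intervalIntegrable_const) fun x => ?_
    exact abs_sub_le _ _ _
  rw [intervalIntegral.integral_add ic.abs intervalIntegrable_const,
    intervalIntegral.integral_const, smul_eq_mul] at h2
  have h3 := mul_le_mul_of_nonneg_left h2 hLi.le
  rw [mul_add, ← mul_assoc _ (b - a), hL', one_mul] at h3
  linarith
end
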